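/- Let $K$ be a field and $n \geq 3$. The projective dimension of $R/I(C_n)$ over $R = K[x_1,\dots,x_n]$, where $I(C_n)$ is the edge ideal of the $n$-cycle, equals $\frac{2n}{3}$ if $n \equiv 0 \pmod 3$, $\frac{2n+1}{3}$ if $n \equiv 1 \pmod 3$, and $\frac{2n-1}{3}$ if $n \equiv 2 \pmod 3$. In particular, it is independent of the characteristic of $K$. -/

import Mathlib

open MvPolynomial

/-- Arithmetical rank: the least number of elements of `R` generating `I` up to radical. -/
noncomputable def araRank {R : Type} [CommRing R] (I : Ideal R) : ℕ :=
  sInf {s : ℕ | ∃ f : Fin s → R, (Ideal.span (Set.range f)).radical = I.radical}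

/-- The edge ideal `I(Cₙ) = (x₁x₂, x₂x₃, …, x_{n-1}xₙ, x₁xₙ)` of the `n`-cycle,
with the vertices `x₁,…,xₙ` of the cycle indexed by `ZMod n` (`xⱼ = X (j : ZMod n)`). -/
noncomputable def cycleIdeal (K : Type) [Field K] (n : ℕ) :
    Ideal (MvPolynomial (ZMod n) K) :=
  Ideal.span (Set.range fun i : ZMod n => X i * X (i + 1))

/-- `xⱼ`, the `j`-th variable of the polynomial ring (indices taken mod `n`). -/
noncomputable def xv (K : Type) [Field K] (n : ℕ) (j : ℕ) : MvPolynomial (ZMod n) K :=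
  X (j : ZMod n)

/-- Projective dimension of an `R`-module `M`, characterized via vanishing of the
`Ext` functors: the least `d` such that `Ext^i(M, N) = 0` for all `i > d` and all `N`. -/
noncomputable def projDim (R : Type) [CommRing R] (M : Type) [AddCommGroup M]
    [Module R M] : ℕ∞ :=
  sInf {d : ℕ∞ | ∀ i : ℕ, d < i → ∀ N : ModuleCat R,
    Subsingleton (((Ext R (ModuleCat R) i).obj (Opposite.op (ModuleCat.of R M))).obj N)}

/-!
Let `Δ` be the independence complex of a graph and `v` a vertex. Since `I_Δ : x_v = I_{link v}` and
`I_Δ + (x_v) = I_{Δ ∖ v} + (x_v)`, there is a short exact sequence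
`0 → K[link v] → K[Δ] → K[Δ ∖ v]/(x_v) → 0` of Stanley–Reisner rings. Projective dimension is
detected by `Ext` into the residue field, and killing a variable on which the ideal does not depend
raises it by one.

For a path, and for a cycle of length `n ≢ 1 (mod 3)`, the projective dimension of the quotient does
not exceed that of the link, which therefore decides. For a cycle of length `n ≡ 1 (mod 3)` it is
larger by one, and the top `Ext` of the quotient survives because the connecting map into it
vanishes: comparing with the same sequence for the path `P` on the vertices other than `v`, where
multiplication by `x_v` is injective, this map factors through `Ext(K[link v]) → Ext(K[P])`. That
map factors through the top `Ext` of a path on `3k + 2` vertices (with one variable killed), which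
is one-dimensional and surjects onto a nonzero module with the image of `Ext(K[link v])` as kernel.
-/

open CategoryTheory Abelian.Ext

namespace EdgeIdeal

section ExtSequences

variable {C : Type*} [Category* C] [Abelian C] [HasExt C] (R : Type*) [CommRing R] [Linear R C]
  {S : ShortComplex C} (hS : S.ShortExact) {Y : C} {d : ℕ}

theorem injective_of_surjective_of_isSimpleModule {M N : Type*} [AddCommGroup M] [Module R M]
    [AddCommGroup N] [Module R N] [IsSimpleModule R M] [Nontrivial N] {f : M →ₗ[R] N}
    (hf : Function.Surjective f) : Function.Injective f :=
  LinearMap.injective_of_ne_zero fun h ↦ by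
    obtain ⟨y, hy⟩ := exists_ne (0 : N)
    obtain ⟨x, rfl⟩ := hf y
    exact hy (by rw [h, LinearMap.zero_apply])

theorem isSimpleModule_of_surjective {M N : Type*} [AddCommGroup M] [Module R M] [AddCommGroup N]
    [Module R N] [IsSimpleModule R M] [Nontrivial N] {f : M →ₗ[R] N}
    (hf : Function.Surjective f) : IsSimpleModule R N :=
  (f.isSimpleModule_iff_of_bijective ⟨injective_of_surjective_of_isSimpleModule R hf, hf⟩).1 ‹_›

theorem nontrivial_ext_X₂_of_hom {S₁ S₂ : ShortComplex C} (h₁ : S₁.ShortExact)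
    (h₂ : S₂.ShortExact) (φ : S₁ ⟶ S₂) [IsIso φ.τ₃]
    (hφ : ∀ x : Abelian.Ext S₂.X₁ Y d, (mk₀ φ.τ₁).comp x (zero_add d) = 0)
    [Nontrivial (Abelian.Ext S₂.X₃ Y (d + 1))] : Nontrivial (Abelian.Ext S₂.X₂ Y (d + 1)) := by
  have extClass_comp_eq_zero (x : Abelian.Ext S₂.X₁ Y d) :
      h₂.extClass.comp x (add_comm 1 d) = 0 := by
    have hτ₃ : (mk₀ φ.τ₃).comp (h₂.extClass.comp x (add_comm 1 d)) (zero_add (d + 1)) = 0 := by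
      rw [← comp_assoc _ _ _ (zero_add 1) _ (by omega), ← h₁.extClass_naturality h₂ φ,
        comp_assoc _ _ _ (add_zero 1) (zero_add d) (by omega), hφ, comp_zero]
    simpa using congrArg (fun e ↦ (mk₀ (inv φ.τ₃)).comp e (zero_add (d + 1))) hτ₃
  obtain ⟨x, hx⟩ := exists_ne (0 : Abelian.Ext S₂.X₃ Y (d + 1))
  refine nontrivial_of_ne ((mk₀ S₂.g).comp x (zero_add (d + 1))) 0 fun h ↦ hx ?_
  obtain ⟨y, rfl⟩ := contravariant_sequence_exact₃ h₂ Y x h (add_comm 1 d)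
  exact extClass_comp_eq_zero y

include hS

theorem precomp_f_surjective [HasProjectiveDimensionLT S.X₃ (d + 1)] :
    Function.Surjective ((mk₀ S.f).precompOfLinear R Y (zero_add d)) := fun x ↦
  contravariant_sequence_exact₁ hS Y x (add_comm 1 d)
    (eq_zero_of_hasProjectiveDimensionLT _ (d + 1) le_rfl)

theorem precomp_g_surjective [HasProjectiveDimensionLT S.X₁ d] :
    Function.Surjective ((mk₀ S.g).precompOfLinear R Y (zero_add d)) := fun x ↦
  contravariant_sequence_exact₂ hS Y x (eq_zero_of_hasProjectiveDimensionLT _ d le_rfl)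

theorem precomp_extClass_surjective [HasProjectiveDimensionLT S.X₂ (d + 1)] :
    Function.Surjective (hS.extClass.precompOfLinear R Y (add_comm 1 d)) := fun x ↦
  contravariant_sequence_exact₃ hS Y x (eq_zero_of_hasProjectiveDimensionLT _ (d + 1) le_rfl)
    (add_comm 1 d)

theorem precomp_extClass_injective
    (h : ∀ x : Abelian.Ext S.X₂ Y d, (mk₀ S.f).comp x (zero_add d) = 0) :
    Function.Injective (hS.extClass.precompOfLinear R Y (add_comm 1 d)) := by
  refine (injective_iff_map_eq_zero _).2 fun x hx ↦ ?_
  obtain ⟨y, rfl⟩ := contravariant_sequence_exact₁ hS Y x (add_comm 1 d) hx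
  exact h y

/-- `Ext(X₂, Y) → Ext(X₁, Y)` is onto, so it is injective by simplicity of the source, and it
kills the image of `Ext(X₃, Y)`. -/
theorem precomp_g_eq_zero [IsSimpleModule R (Abelian.Ext S.X₂ Y d)]
    [Nontrivial (Abelian.Ext S.X₁ Y d)] [HasProjectiveDimensionLT S.X₃ (d + 1)]
    (x : Abelian.Ext S.X₃ Y d) : (mk₀ S.g).comp x (zero_add d) = 0 :=
  injective_of_surjective_of_isSimpleModule R (precomp_f_surjective R hS) (by simp)

end ExtSequences

section TopExt

variable {C : Type*} [Category* C] [Abelian C] [HasExt C] {X Y : C} {d : ℕ}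

/-- `X` has projective dimension exactly `d`, the lower bound being witnessed by
`Extᵈ(X, Y) ≠ 0`. -/
structure HasTopExt (X Y : C) (d : ℕ) : Prop where
  hasProjectiveDimensionLE : HasProjectiveDimensionLE X d
  nontrivial : Nontrivial (Abelian.Ext X Y d)

theorem HasTopExt.hasProjectiveDimensionLE_of_le {e : ℕ} (h : HasTopExt X Y d)
    (hde : d ≤ e) : HasProjectiveDimensionLE X e :=
  have := h.hasProjectiveDimensionLE
  hasProjectiveDimensionLT_of_ge X (d + 1) (e + 1) (by omega)

end TopExt

section ProjectiveDimension

variable {R : Type} [CommRing R]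

theorem subsingleton_ext_succ_iff (M N : ModuleCat.{0} R) (i : ℕ) :
    Subsingleton (((_root_.Ext R (ModuleCat R) (i + 1)).obj (Opposite.op M)).obj N) ↔
      Subsingleton (Abelian.Ext M N (i + 1)) := by
  let P := projectiveResolution M
  rw [(P.isoExt (R := R) (i + 1) N).toLinearEquiv.toEquiv.subsingleton_congr,
    ← ModuleCat.isZero_iff_subsingleton, ← HomologicalComplex.exactAt_iff_isZero_homology,
    HomologicalComplex.exactAt_iff' _ i (i + 1) (i + 2) (by simp) (by simp),
    ShortComplex.moduleCat_exact_iff]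
  constructor
  · intro h
    refine subsingleton_of_forall_eq 0 fun x ↦ ?_
    obtain ⟨f, hf, rfl⟩ := P.extMk_surjective x (i + 2) rfl
    rw [P.extMk_eq_zero_iff f (i + 2) rfl hf i rfl]
    exact h f hf
  · intro h f hf
    exact (P.extMk_eq_zero_iff f (i + 2) rfl hf i rfl).1 (Subsingleton.elim _ _)

theorem projDim_le_iff (M : Type) [AddCommGroup M] [Module R M] (d : ℕ) :
    projDim R M ≤ d ↔ HasProjectiveDimensionLE (ModuleCat.of R M) d := by
  constructor
  · intro h
    have hmem := csInf_mem (s := {d : ℕ∞ | ∀ i : ℕ, d < i → ∀ N : ModuleCat R,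
      Subsingleton (((_root_.Ext R (ModuleCat R) i).obj (Opposite.op (ModuleCat.of R M))).obj N)})
      ⟨⊤, fun i hi ↦ absurd hi not_top_lt⟩
    refine HasProjectiveDimensionLT.mk fun i hi N ↦ ?_
    obtain ⟨i, rfl⟩ := Nat.exists_eq_add_of_le' (Nat.one_le_of_lt hi)
    have := (subsingleton_ext_succ_iff _ N i).1
      (hmem (i + 1) (h.trans_lt (by exact_mod_cast hi)) N)
    exact fun e ↦ Subsingleton.elim _ _
  · refine fun h ↦ sInf_le fun i hi N ↦ ?_
    obtain ⟨i, rfl⟩ := Nat.exists_eq_add_of_le' (Nat.one_le_of_lt (Nat.cast_lt.1 hi))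
    exact (subsingleton_ext_succ_iff _ N i).2 <|
      HasProjectiveDimensionLT.subsingleton _ (d + 1) _ (by exact_mod_cast hi) N

theorem HasTopExt.projDim_eq {M : Type} [AddCommGroup M] [Module R M] {N : ModuleCat.{0} R}
    {d : ℕ} (h : HasTopExt (ModuleCat.of R M) N d) : projDim R M = d := by
  refine le_antisymm ((projDim_le_iff M d).2 h.1) (le_of_not_gt fun hlt ↦ ?_)
  obtain ⟨e, he⟩ := ENat.ne_top_iff_exists.1 hlt.ne_top
  rw [← he, Nat.cast_lt] at hlt
  have := (projDim_le_iff M e).1 he.ge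
  have := HasProjectiveDimensionLT.subsingleton (ModuleCat.of R M) (e + 1) d hlt N
  exact not_nontrivial _ h.2

end ProjectiveDimension

section Colon

variable {R : Type*} [CommRing R] {I J L : Ideal R} {y : R}

/-- The complex `R ⧸ (I : y) ⟶ R ⧸ I ⟶ R ⧸ (I + (y))` whose first map is multiplication by `y`.
The two outer ideals are variables `J` and `L`, so that they can be taken in closed form. -/
noncomputable abbrev colonComplex (hJ : I.colon {y} = J) (hL : I ⊔ Ideal.span {y} = L) :
    ShortComplex (ModuleCat R) where
  X₁ := ModuleCat.of R (R ⧸ J)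
  X₂ := ModuleCat.of R (R ⧸ I)
  X₃ := ModuleCat.of R (R ⧸ L)
  f := ModuleCat.ofHom <| Submodule.mapQ J I (LinearMap.mulRight R y) fun r hr ↦
    Submodule.mem_colon_singleton.1 (hJ.ge hr)
  g := ModuleCat.ofHom <| Submodule.factor (le_sup_left.trans hL.le)
  zero := by
    refine ModuleCat.hom_ext (Submodule.linearMap_qext _ (LinearMap.ext fun r ↦ ?_))
    exact Ideal.Quotient.eq_zero_iff_mem.2
      (hL.le (Ideal.mem_sup_right (Ideal.mul_mem_left _ r (Ideal.mem_span_singleton_self y))))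

theorem colonComplex_shortExact (hJ : I.colon {y} = J) (hL : I ⊔ Ideal.span {y} = L) :
    (colonComplex hJ hL).ShortExact := by
  refine ModuleCat.shortComplex_shortExact _ (fun x ↦ ⟨fun hx ↦ ?_, ?_⟩) ?_ ?_
  · obtain ⟨r, rfl⟩ := Ideal.Quotient.mk_surjective x
    have hr : r ∈ Ideal.span {y} ⊔ I :=
      (sup_comm _ _).trans hL |>.ge (Ideal.Quotient.eq_zero_iff_mem.1 hx)
    obtain ⟨a, b, hb, rfl⟩ := Ideal.mem_span_singleton_sup.1 hr
    exact ⟨Ideal.Quotient.mk J a, Ideal.Quotient.eq.2 (by simpa using hb)⟩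
  · rintro ⟨z, rfl⟩
    exact (colonComplex hJ hL).moduleCat_zero_apply z
  · refine (injective_iff_map_eq_zero (colonComplex hJ hL).f.hom).2 fun x hx ↦ ?_
    obtain ⟨r, rfl⟩ := Ideal.Quotient.mk_surjective x
    exact Ideal.Quotient.eq_zero_iff_mem.2
      (hJ.le (Submodule.mem_colon_singleton.2 (Ideal.Quotient.eq_zero_iff_mem.1 hx)))
  · exact Submodule.factor_surjective (le_sup_left.trans hL.le)

theorem smul_id_comp_eq_zero {M N : ModuleCat R} {d : ℕ} (hy : ∀ z : N, y • z = 0)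
    (x : Abelian.Ext M N d) : (mk₀ (y • 𝟙 M)).comp x (zero_add d) = 0 := by
  have h : y • 𝟙 N = 0 := by
    ext z
    exact hy z
  rw [mk₀_smul, smul_comp, mk₀_id_comp, smul_eq_comp_mk₀, h, mk₀_zero, comp_zero]

variable {d : ℕ} {N : ModuleCat R}

section

variable (hJ : I.colon {y} = J) (hL : I ⊔ Ideal.span {y} = L)

include hJ hL

theorem hasProjectiveDimensionLE_of_colon
    (h₁ : HasProjectiveDimensionLE (ModuleCat.of R (R ⧸ J)) d)
    (h₃ : HasProjectiveDimensionLE (ModuleCat.of R (R ⧸ L)) d) :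
    HasProjectiveDimensionLE (ModuleCat.of R (R ⧸ I)) d :=
  (colonComplex_shortExact hJ hL).hasProjectiveDimensionLT_X₂ (d + 1) h₁ h₃

theorem HasTopExt.of_colon (h₁ : HasTopExt (ModuleCat.of R (R ⧸ J)) N d)
    (h₃ : HasProjectiveDimensionLE (ModuleCat.of R (R ⧸ L)) d) :
    HasTopExt (ModuleCat.of R (R ⧸ I)) N d where
  hasProjectiveDimensionLE := hasProjectiveDimensionLE_of_colon hJ hL h₁.1 h₃
  nontrivial :=
    have : HasProjectiveDimensionLT (colonComplex hJ hL).X₃ (d + 1) := h₃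
    have := h₁.nontrivial
    (precomp_f_surjective R (colonComplex_shortExact hJ hL)).nontrivial

theorem isSimpleModule_ext_of_sup_span (h₁ : HasProjectiveDimensionLT (ModuleCat.of R (R ⧸ J)) d)
    [Nontrivial (Abelian.Ext (ModuleCat.of R (R ⧸ I)) N d)]
    [IsSimpleModule R (Abelian.Ext (ModuleCat.of R (R ⧸ L)) N d)] :
    IsSimpleModule R (Abelian.Ext (ModuleCat.of R (R ⧸ I)) N d) :=
  have : HasProjectiveDimensionLT (colonComplex hJ hL).X₁ d := h₁
  isSimpleModule_of_surjective R
    (precomp_g_surjective R (colonComplex_shortExact hJ hL))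

end

section Regular

variable (hI : I.colon {y} = I) (hL : I ⊔ Ideal.span {y} = L) (hy : ∀ z : N, y • z = 0)

include hI hL hy

theorem HasTopExt.sup_span (h : HasTopExt (ModuleCat.of R (R ⧸ I)) N d) :
    HasTopExt (ModuleCat.of R (R ⧸ L)) N (d + 1) where
  hasProjectiveDimensionLE :=
    have := h.1
    (colonComplex_shortExact hI hL).hasProjectiveDimensionLT_X₃ (d + 1) h.1
      (hasProjectiveDimensionLT_of_ge _ (d + 1) _ (by omega))
  nontrivial :=
    have hf : (colonComplex hI hL).f = y • 𝟙 _ :=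
      ModuleCat.hom_ext (Submodule.linearMap_qext _ (LinearMap.ext fun r ↦ by
        exact congrArg (Ideal.Quotient.mk I) (mul_comm r y)))
    have := h.nontrivial
    (precomp_extClass_injective R (colonComplex_shortExact hI hL) fun x ↦ by
      rw [hf]; exact smul_id_comp_eq_zero hy x).nontrivial

theorem isSimpleModule_ext_sup_span (h : HasTopExt (ModuleCat.of R (R ⧸ I)) N d)
    [IsSimpleModule R (Abelian.Ext (ModuleCat.of R (R ⧸ I)) N d)] :
    IsSimpleModule R (Abelian.Ext (ModuleCat.of R (R ⧸ L)) N (d + 1)) :=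
  have : HasProjectiveDimensionLT (colonComplex hI hL).X₂ (d + 1) := h.1
  have := (h.sup_span hI hL hy).nontrivial
  isSimpleModule_of_surjective R
    (precomp_extClass_surjective R (colonComplex_shortExact hI hL))

end Regular

theorem precomp_factor_eq_zero (hIL : I ≤ L) (hJ : I.colon {y} = J) (hL : I ⊔ Ideal.span {y} = L)
    [Nontrivial (Abelian.Ext (ModuleCat.of R (R ⧸ J)) N d)]
    [IsSimpleModule R (Abelian.Ext (ModuleCat.of R (R ⧸ I)) N d)]
    (h₃ : HasProjectiveDimensionLE (ModuleCat.of R (R ⧸ L)) d)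
    (x : Abelian.Ext (ModuleCat.of R (R ⧸ L)) N d) :
    (mk₀ (ModuleCat.ofHom (Submodule.factor hIL))).comp x (zero_add d) = 0 :=
  have : HasProjectiveDimensionLT (colonComplex hJ hL).X₃ (d + 1) := h₃
  precomp_g_eq_zero R (colonComplex_shortExact hJ hL) x

theorem precomp_factor_trans_eq_zero (hIJ : I ≤ J) (hJL : J ≤ L)
    {x : Abelian.Ext (ModuleCat.of R (R ⧸ L)) N d}
    (hx : (mk₀ (ModuleCat.ofHom (Submodule.factor hJL))).comp x (zero_add d) = 0) :
    (mk₀ (ModuleCat.ofHom (Submodule.factor (hIJ.trans hJL)))).comp x (zero_add d) = 0 := by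
  rw [← Submodule.factor_comp hIJ hJL, ModuleCat.ofHom_comp, ← mk₀_comp_mk₀_assoc, hx, comp_zero]

/-- Inclusions of ideals induce a morphism of colon sequences. -/
noncomputable def colonComplexMap {I' J' : Ideal R} (hI : I' ≤ I) (hJ : J' ≤ J)
    (hJ₁ : I'.colon {y} = J') (hL₁ : I' ⊔ Ideal.span {y} = L) (hJ₂ : I.colon {y} = J)
    (hL₂ : I ⊔ Ideal.span {y} = L) : colonComplex hJ₁ hL₁ ⟶ colonComplex hJ₂ hL₂ where
  τ₁ := ModuleCat.ofHom (Submodule.factor hJ)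
  τ₂ := ModuleCat.ofHom (Submodule.factor hI)
  τ₃ := 𝟙 _
  comm₁₂ := ModuleCat.hom_ext (Submodule.linearMap_qext _ rfl)
  comm₂₃ := ModuleCat.hom_ext (Submodule.linearMap_qext _ rfl)

theorem nontrivial_ext_of_precomp_factor_eq_zero {I' J' : Ideal R} (hI : I' ≤ I) (hJ : J' ≤ J)
    (hJ₁ : I'.colon {y} = J') (hL₁ : I' ⊔ Ideal.span {y} = L) (hJ₂ : I.colon {y} = J)
    (hL₂ : I ⊔ Ideal.span {y} = L)
    (h₀ : ∀ x : Abelian.Ext (ModuleCat.of R (R ⧸ J)) N d,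
      (mk₀ (ModuleCat.ofHom (Submodule.factor hJ))).comp x (zero_add d) = 0)
    [Nontrivial (Abelian.Ext (ModuleCat.of R (R ⧸ L)) N (d + 1))] :
    Nontrivial (Abelian.Ext (ModuleCat.of R (R ⧸ I)) N (d + 1)) :=
  have : IsIso (colonComplexMap hI hJ hJ₁ hL₁ hJ₂ hL₂).τ₃ := inferInstanceAs (IsIso (𝟙 _))
  nontrivial_ext_X₂_of_hom (colonComplex_shortExact hJ₁ hL₁) (colonComplex_shortExact hJ₂ hL₂)
    (colonComplexMap hI hJ hJ₁ hL₁ hJ₂ hL₂) h₀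

end Colon

section SquarefreeMonomialIdeals

variable (K : Type*) [Field K] {σ : Type*}

/-- The squarefree monomial ideal spanned by the monomials whose support lies in `U`; its
quotient is the Stanley–Reisner ring of the complex whose nonfaces form `U`. -/
noncomputable def squarefreeIdeal (U : UpperSet (Finset σ)) : Ideal (MvPolynomial σ K) :=
  Ideal.span ((fun u ↦ monomial u (1 : K)) '' {u | u.support ∈ U})

/-- The squarefree monomial with support `T`. -/
noncomputable def sqfreeMonomial (T : Finset σ) : MvPolynomial σ K :=
  monomial (Finsupp.indicator T fun _ _ ↦ 1) 1

variable {K} {U V W : UpperSet (Finset σ)} {S T : Finset σ}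

theorem mem_squarefreeIdeal {f : MvPolynomial σ K} :
    f ∈ squarefreeIdeal K U ↔ ∀ u, f.coeff u ≠ 0 → u.support ∈ U := by
  simp only [squarefreeIdeal, mem_ideal_span_monomial_image, mem_support_iff]
  refine forall₂_congr fun u _ ↦ ⟨?_, fun h ↦ ⟨u, h, le_rfl⟩⟩
  rintro ⟨s, hs, hsu⟩
  exact U.upper (Finsupp.support_mono hsu) hs

theorem squarefreeIdeal_antitone : Antitone (squarefreeIdeal K (σ := σ)) := fun _ _ h ↦
  Ideal.span_mono (Set.image_mono fun _ hu ↦ h hu)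

theorem squarefreeIdeal_top : squarefreeIdeal K (⊤ : UpperSet (Finset σ)) = ⊥ := by
  simp [squarefreeIdeal]

theorem squarefreeIdeal_inf :
    squarefreeIdeal K (U ⊓ V) = squarefreeIdeal K U ⊔ squarefreeIdeal K V := by
  simp only [squarefreeIdeal, UpperSet.mem_inf_iff, Set.ofPred_or, Set.image_union,
    Ideal.span_union]

theorem squarefreeIdeal_iInf {ι : Sort*} (U : ι → UpperSet (Finset σ)) :
    squarefreeIdeal K (⨅ i, U i) = ⨆ i, squarefreeIdeal K (U i) := by
  simp only [squarefreeIdeal, UpperSet.mem_iInf_iff, Set.ofPred_exists, Set.image_iUnion,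
    Ideal.span_iUnion]

theorem indicator_one_le_iff {u : σ →₀ ℕ} :
    (Finsupp.indicator T fun _ _ ↦ (1 : ℕ)) ≤ u ↔ T ⊆ u.support := by
  classical
  simp only [Finsupp.le_def, Finsupp.indicator_apply, Finset.subset_iff, Finsupp.mem_support_iff]
  grind

theorem squarefreeIdeal_Ici :
    squarefreeIdeal K (UpperSet.Ici T) = Ideal.span {sqfreeMonomial K T} := by
  refine le_antisymm (Ideal.span_le.2 ?_) ((Ideal.span_singleton_le_iff_mem _).2 ?_)
  · rintro _ ⟨u, hu, rfl⟩
    exact Ideal.mem_span_singleton.2 <|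
      monomial_dvd_monomial.2 ⟨.inr (indicator_one_le_iff.2 hu), dvd_rfl⟩
  · exact Ideal.subset_span ⟨_, indicator_one_le_iff.1 le_rfl, rfl⟩

theorem sup_span_sqfreeMonomial (h : U ⊓ UpperSet.Ici T = W) :
    squarefreeIdeal K U ⊔ Ideal.span {sqfreeMonomial K T} = squarefreeIdeal K W := by
  rw [← h, squarefreeIdeal_inf, squarefreeIdeal_Ici]

section Link

variable [DecidableEq σ]

theorem sqfreeMonomial_pair {i j : σ} (h : i ≠ j) : sqfreeMonomial K {i, j} = X i * X j := by
  rw [sqfreeMonomial, X, X, monomial_mul, one_mul]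
  congr
  ext
  simp only [Finsupp.indicator_apply, Finset.mem_insert, Finset.mem_singleton, dite_eq_ite,
    Finsupp.coe_add, Pi.add_apply, Finsupp.single_apply]
  grind

/-- The nonfaces of the link of `T` in the complex whose nonfaces form `U`. -/
def link (U : UpperSet (Finset σ)) (T : Finset σ) : UpperSet (Finset σ) where
  carrier := {F | F ∪ T ∈ U}
  upper' _ _ h := U.upper (Finset.union_subset_union_left h)

@[simp]
theorem mem_link {F : Finset σ} : F ∈ link U T ↔ F ∪ T ∈ U := Iff.rfl

theorem link_le : link U T ≤ U := fun _ h ↦ U.upper Finset.subset_union_left h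

theorem link_inf : link (U ⊓ V) T = link U T ⊓ link V T := rfl

theorem link_Ici_of_disjoint (h : Disjoint S T) :
    link (UpperSet.Ici S) T = UpperSet.Ici S :=
  UpperSet.ext <| Set.ext fun _ ↦
    ⟨h.left_le_of_le_sup_right, fun hF ↦ hF.trans Finset.subset_union_left⟩

theorem colon_sqfreeMonomial (h : link U T = V) :
    (squarefreeIdeal K U).colon {sqfreeMonomial K T} = squarefreeIdeal K V := by
  have hsupp (u : σ →₀ ℕ) :
      (u + Finsupp.indicator T fun _ _ ↦ (1 : ℕ)).support = u.support ∪ T := by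
    ext i
    simp only [Finsupp.mem_support_iff, Finsupp.coe_add, Pi.add_apply, Finsupp.indicator_apply,
      dite_eq_ite, ne_eq, Nat.add_eq_zero_iff, ite_eq_right_iff, one_ne_zero, imp_false,
      Finset.mem_union]
    tauto
  ext f
  simp only [Submodule.mem_colon_singleton, mem_squarefreeIdeal, sqfreeMonomial, ← h, mem_link,
    smul_eq_mul, coeff_mul_monomial', ← hsupp]
  constructor
  · intro hf u hu
    exact hf _ (by simpa)
  · intro hf u hu
    split_ifs at hu with hle
    · rw [← tsub_add_cancel_of_le hle]
      exact hf _ (by simpa using hu)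
    · simp at hu

end Link

section ResidueModule

variable (K)

variable (σ) in
/-- The residue field of `K[σ]` at the origin, whose `Ext` groups detect projective dimension. -/
noncomputable abbrev residueModule : ModuleCat (MvPolynomial σ K) :=
  ModuleCat.of _ (MvPolynomial σ K ⧸ RingHom.ker (constantCoeff (σ := σ) (R := K)))

/-- The Stanley–Reisner ring of the complex with nonfaces `U`, as a `K[σ]`-module. -/
noncomputable abbrev stanleyReisner (U : UpperSet (Finset σ)) : ModuleCat (MvPolynomial σ K) :=
  ModuleCat.of _ (MvPolynomial σ K ⧸ squarefreeIdeal K U)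

variable {K}

theorem sqfreeMonomial_smul_residueModule (hT : T.Nonempty) (z : residueModule K σ) :
    sqfreeMonomial K T • z = 0 := by
  classical
  obtain ⟨r, rfl⟩ := Ideal.Quotient.mk_surjective z
  refine Ideal.Quotient.eq_zero_iff_mem.2 (Ideal.mul_mem_right r _ ?_)
  obtain ⟨i, hi⟩ := hT
  rw [RingHom.mem_ker, sqfreeMonomial, constantCoeff_monomial, if_neg]
  exact fun h ↦ by simpa [Finsupp.indicator_of_mem hi] using DFunLike.congr_fun h i

variable (K σ) in
theorem isSimpleModule_residueModule :
    IsSimpleModule (MvPolynomial σ K) (residueModule K σ) := by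
  rw [isSimpleModule_iff_quot_maximal]
  exact ⟨_, RingHom.ker_isMaximal_of_surjective _ fun c ↦ ⟨C c, constantCoeff_C σ c⟩,
    ⟨LinearEquiv.refl _ _⟩⟩

theorem isSimpleModule_ext_stanleyReisner_top :
    IsSimpleModule (MvPolynomial σ K)
      (Abelian.Ext (stanleyReisner K (⊤ : UpperSet (Finset σ))) (residueModule K σ) 0) :=
  have := isSimpleModule_residueModule K σ
  .congr <| linearEquiv₀ ≪≫ₗ ModuleCat.homLinearEquiv ≪≫ₗ
    (Submodule.quotEquivOfEqBot _ squarefreeIdeal_top).congrLeft _ _ ≪≫ₗ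
    LinearMap.ringLmapEquivSelf _ _ _

theorem hasTopExt_stanleyReisner_top :
    HasTopExt (stanleyReisner K (⊤ : UpperSet (Finset σ))) (residueModule K σ) 0 where
  hasProjectiveDimensionLE := by
    have : Module.Projective (MvPolynomial σ K) (MvPolynomial σ K ⧸ squarefreeIdeal K ⊤) :=
      .of_equiv (Submodule.quotEquivOfEqBot _ squarefreeIdeal_top).symm
    exact (projective_iff_hasProjectiveDimensionLE_zero _).1
      ((IsProjective.iff_projective _).1 this)
  nontrivial :=
    have := isSimpleModule_ext_stanleyReisner_top (K := K) (σ := σ)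
    IsSimpleModule.nontrivial (MvPolynomial σ K) _

variable [DecidableEq σ] {d : ℕ}

theorem HasTopExt.inf_Ici (hU : link U T = U) (hT : T.Nonempty)
    (h : HasTopExt (stanleyReisner K U) (residueModule K σ) d) :
    HasTopExt (stanleyReisner K (U ⊓ UpperSet.Ici T)) (residueModule K σ) (d + 1) :=
  h.sup_span (colon_sqfreeMonomial hU) (sup_span_sqfreeMonomial rfl)
    (sqfreeMonomial_smul_residueModule hT)

theorem isSimpleModule_ext_inf_Ici (hU : link U T = U) (hT : T.Nonempty)
    (h : HasTopExt (stanleyReisner K U) (residueModule K σ) d)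
    [IsSimpleModule (MvPolynomial σ K)
      (Abelian.Ext (stanleyReisner K U) (residueModule K σ) d)] :
    IsSimpleModule (MvPolynomial σ K)
      (Abelian.Ext (stanleyReisner K (U ⊓ UpperSet.Ici T)) (residueModule K σ) (d + 1)) :=
  isSimpleModule_ext_sup_span (colon_sqfreeMonomial hU) (sup_span_sqfreeMonomial rfl)
    (sqfreeMonomial_smul_residueModule hT) h

end ResidueModule

end SquarefreeMonomialIdeals

section Walks

variable {σ : Type*} {a b v x y z : σ} {l l₁ l₂ : List σ}

/-- The sets of vertices containing two consecutive vertices of the walk `l`. These are the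
nonfaces of the independence complex of the path (or, for a closed walk, of the cycle)
traversed by `l`. -/
def walkNonfaces (l : List σ) : UpperSet (Finset σ) where
  carrier := {F | ¬l.IsChain fun a b ↦ ¬(a ∈ F ∧ b ∈ F)}
  upper' _ _ hFG hF hG := hF (hG.imp fun _ _ h h' ↦ h ⟨hFG h'.1, hFG h'.2⟩)

theorem mem_walkNonfaces {F : Finset σ} :
    F ∈ walkNonfaces l ↔ ¬l.IsChain fun a b ↦ ¬(a ∈ F ∧ b ∈ F) := Iff.rfl

@[simp]
theorem walkNonfaces_nil : walkNonfaces ([] : List σ) = ⊤ := by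
  ext
  simp [mem_walkNonfaces]

@[simp]
theorem walkNonfaces_singleton : walkNonfaces [a] = ⊤ := by
  ext
  simp [mem_walkNonfaces]

theorem walkNonfaces_append_le : walkNonfaces (l₁ ++ l₂) ≤ walkNonfaces l₁ := fun _ hF h ↦
  hF h.left_of_append

theorem walkNonfaces_append_cons_inf_Ici :
    walkNonfaces (l₁ ++ v :: l₂) ⊓ UpperSet.Ici {v} =
      walkNonfaces l₁ ⊓ walkNonfaces l₂ ⊓ UpperSet.Ici {v} := by
  ext F
  by_cases hv : v ∈ F
  · simp [hv]
  · simp [hv, mem_walkNonfaces, List.isChain_append, List.isChain_cons, imp_iff_not_or]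

theorem walkNonfaces_cons_inf_Ici :
    walkNonfaces (v :: l) ⊓ UpperSet.Ici {v} = walkNonfaces l ⊓ UpperSet.Ici {v} := by
  simpa using walkNonfaces_append_cons_inf_Ici (l₁ := []) (l₂ := l)

theorem walkNonfaces_concat_inf_Ici :
    walkNonfaces (l ++ [v]) ⊓ UpperSet.Ici {v} = walkNonfaces l ⊓ UpperSet.Ici {v} := by
  simpa using walkNonfaces_append_cons_inf_Ici (l₁ := l) (l₂ := [])

variable [DecidableEq σ]

theorem walkNonfaces_append_cons_cons :
    walkNonfaces (l₁ ++ a :: b :: l₂) =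
      walkNonfaces (l₁ ++ [a]) ⊓ (UpperSet.Ici {a, b} ⊓ walkNonfaces (b :: l₂)) := by
  ext F
  simp only [UpperSet.coe_inf, Set.mem_union, SetLike.mem_coe, mem_walkNonfaces,
    List.isChain_append_cons_cons, UpperSet.mem_Ici_iff, Finset.insert_subset_iff,
    Finset.singleton_subset_iff]
  tauto

theorem walkNonfaces_cons_cons :
    walkNonfaces (a :: b :: l) = UpperSet.Ici {a, b} ⊓ walkNonfaces (b :: l) := by
  simpa using walkNonfaces_append_cons_cons (l₁ := []) (a := a) (b := b) (l₂ := l)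

theorem link_walkNonfaces_of_forall_notMem {T : Finset σ} (h : ∀ v ∈ T, v ∉ l) :
    link (walkNonfaces l) T = walkNonfaces l := by
  ext F
  refine not_congr (List.IsChain.iff_of_mem_imp fun a b ha hb ↦ ?_)
  have hmem (c : σ) (hc : c ∈ l) : c ∈ F ∪ T ↔ c ∈ F :=
    Finset.mem_union.trans (or_iff_left fun hT ↦ h c hT hc)
  rw [hmem a ha, hmem b hb]

theorem link_walkNonfaces_inf_Ici {S T : Finset σ} (h : ∀ v ∈ T, v ∉ l) (hST : Disjoint S T) :
    link (walkNonfaces l ⊓ UpperSet.Ici S) T = walkNonfaces l ⊓ UpperSet.Ici S := by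
  rw [link_inf, link_walkNonfaces_of_forall_notMem h, link_Ici_of_disjoint hST]

theorem link_walkNonfaces_of_notMem (h : v ∉ l) :
    link (walkNonfaces l) {v} = walkNonfaces l :=
  link_walkNonfaces_of_forall_notMem (by simpa using h)

theorem link_Ici_pair (h : v ≠ x) : link (UpperSet.Ici {v, x}) {v} = UpperSet.Ici {x} := by
  ext F
  simp [Finset.insert_subset_iff, h.symm]

theorem link_walkNonfaces_cons_cons (hv : v ∉ y :: l) :
    link (walkNonfaces (v :: y :: l)) {v} = walkNonfaces l ⊓ UpperSet.Ici {y} := by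
  rw [walkNonfaces_cons_cons, link_inf, link_Ici_pair (List.ne_of_not_mem_cons hv),
    link_walkNonfaces_of_notMem hv, inf_comm, walkNonfaces_cons_inf_Ici]

theorem link_walkNonfaces_append (h₁ : v ∉ l₁ ++ [x]) (h₂ : v ∉ y :: l₂) :
    link (walkNonfaces (l₁ ++ x :: v :: y :: l₂)) {v} =
      walkNonfaces l₁ ⊓ UpperSet.Ici {x} ⊓ (walkNonfaces l₂ ⊓ UpperSet.Ici {y}) := by
  have hx : v ≠ x := by rintro rfl; simp at h₁
  rw [walkNonfaces_append_cons_cons, link_inf, link_inf, link_walkNonfaces_of_notMem h₁,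
    Finset.pair_comm, link_Ici_pair hx, link_walkNonfaces_cons_cons h₂, ← inf_assoc,
    walkNonfaces_concat_inf_Ici]

end Walks

section Paths

variable {K σ : Type*} [Field K] {a b c : σ} {l : List σ} {d : ℕ}

theorem HasTopExt.walkNonfaces_inf_Ici_inf_Ici
    (h : HasTopExt (stanleyReisner K (walkNonfaces l)) (residueModule K σ) d)
    (ha : a ∉ l) (hb : b ∉ a :: l) :
    HasTopExt (stanleyReisner K (walkNonfaces l ⊓ UpperSet.Ici {a} ⊓ UpperSet.Ici {b}))
      (residueModule K σ) (d + 2) := by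
  classical
  rw [List.mem_cons, not_or] at hb
  exact (h.inf_Ici (link_walkNonfaces_of_notMem ha) (Finset.singleton_nonempty a)).inf_Ici
    (link_walkNonfaces_inf_Ici (by simpa using hb.2) (by simpa using Ne.symm hb.1))
    (Finset.singleton_nonempty b)

theorem hasTopExt_walkNonfaces : ∀ l : List σ, l.Nodup →
    HasTopExt (stanleyReisner K (walkNonfaces l)) (residueModule K σ) (2 * l.length / 3)
  | [], _ => by simpa using hasTopExt_stanleyReisner_top
  | [a], _ => by simpa using hasTopExt_stanleyReisner_top
  | [a, b], _ => by
    classical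
    rw [walkNonfaces_cons_cons, walkNonfaces_singleton, inf_comm,
      show 2 * [a, b].length / 3 = 0 + 1 by simp]
    exact (hasTopExt_stanleyReisner_top (K := K)).inf_Ici rfl (Finset.insert_nonempty a {b})
  | a :: b :: c :: l, h => by
    classical
    simp only [List.nodup_cons, List.mem_cons, not_or] at h
    have hlink : link (walkNonfaces (a :: b :: c :: l)) {b} =
        walkNonfaces l ⊓ UpperSet.Ici {c} ⊓ UpperSet.Ici {a} := by
      simpa [inf_comm] using link_walkNonfaces_append (v := b) (l₁ := []) (x := a) (y := c)
        (l₂ := l) (by grind) (by grind)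
    have hdel : walkNonfaces (a :: b :: c :: l) ⊓ UpperSet.Ici {b} =
        walkNonfaces (c :: l) ⊓ UpperSet.Ici {b} := by
      simpa using walkNonfaces_append_cons_inf_Ici (l₁ := [a]) (v := b) (l₂ := c :: l)
    have htop := (hasTopExt_walkNonfaces (c :: l) (by grind)).inf_Ici
      (link_walkNonfaces_of_notMem (v := b) (by grind)) (Finset.singleton_nonempty b)
    rw [show 2 * (a :: b :: c :: l).length / 3 = 2 * l.length / 3 + 2 by grind]
    exact ((hasTopExt_walkNonfaces l (by grind)).walkNonfaces_inf_Ici_inf_Ici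
      (by grind) (by grind)).of_colon (colon_sqfreeMonomial hlink) (sup_span_sqfreeMonomial hdel)
      (htop.hasProjectiveDimensionLE_of_le (e := 2 * l.length / 3 + 2) (by grind))

theorem isSimpleModule_ext_inf_Ici_pair_inf_Ici [DecidableEq σ] (ha : a ∉ l) (hb : b ∉ l)
    (hc : c ∉ a :: b :: l)
    (h : HasTopExt (stanleyReisner K (walkNonfaces l)) (residueModule K σ) d)
    [IsSimpleModule (MvPolynomial σ K)
      (Abelian.Ext (stanleyReisner K (walkNonfaces l)) (residueModule K σ) d)] :
    IsSimpleModule (MvPolynomial σ K)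
      (Abelian.Ext (stanleyReisner K (walkNonfaces l ⊓ UpperSet.Ici {a, b} ⊓ UpperSet.Ici {c}))
        (residueModule K σ) (d + 2)) :=
  have hlink := link_walkNonfaces_of_forall_notMem (l := l) (T := {a, b}) (by grind)
  have := isSimpleModule_ext_inf_Ici hlink (Finset.insert_nonempty a {b}) h
  isSimpleModule_ext_inf_Ici
    (link_walkNonfaces_inf_Ici (by grind) (Finset.disjoint_singleton_right.2 (by grind)))
    (Finset.singleton_nonempty c) (h.inf_Ici hlink (Finset.insert_nonempty a {b}))

theorem isSimpleModule_ext_walkNonfaces : ∀ l : List σ, l.Nodup → l.length % 3 = 2 →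
    IsSimpleModule (MvPolynomial σ K)
      (Abelian.Ext (stanleyReisner K (walkNonfaces l)) (residueModule K σ) (2 * l.length / 3))
  | [_, _, _], _, h | [_, _, _, _], _, h => by simp at h
  | [a, b], _, _ => by
    classical
    have := isSimpleModule_ext_stanleyReisner_top (K := K) (σ := σ)
    rw [walkNonfaces_cons_cons, walkNonfaces_singleton, inf_comm,
      show 2 * [a, b].length / 3 = 0 + 1 by simp]
    exact isSimpleModule_ext_inf_Ici rfl (Finset.insert_nonempty a {b})
      hasTopExt_stanleyReisner_top
  | a :: b :: c :: x :: y :: l, h, hl => by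
    classical
    have htop := hasTopExt_walkNonfaces (K := K) _ h
    simp only [List.nodup_cons, List.mem_cons, not_or] at h
    have hlink : link (walkNonfaces (a :: b :: c :: x :: y :: l)) {c} =
        walkNonfaces (y :: l) ⊓ UpperSet.Ici {x} ⊓ UpperSet.Ici {b} := by
      simpa [inf_comm] using link_walkNonfaces_append (v := c) (l₁ := [a]) (x := b) (y := x)
        (l₂ := y :: l) (by grind) (by grind)
    have hdel : walkNonfaces (a :: b :: c :: x :: y :: l) ⊓ UpperSet.Ici {c} =
        walkNonfaces (x :: y :: l) ⊓ UpperSet.Ici {a, b} ⊓ UpperSet.Ici {c} := by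
      simpa [walkNonfaces_cons_cons, inf_comm, inf_left_comm] using
        walkNonfaces_append_cons_inf_Ici (l₁ := [a, b]) (v := c) (l₂ := x :: y :: l)
    have hlink_top := (hasTopExt_walkNonfaces (K := K) (y :: l)
      (by grind)).walkNonfaces_inf_Ici_inf_Ici (a := x) (b := b) (by grind) (by grind)
    have := isSimpleModule_ext_walkNonfaces (x :: y :: l) (by grind) (by grind)
    have :=
      isSimpleModule_ext_inf_Ici_pair_inf_Ici (K := K) (a := a) (b := b) (c := c)
        (l := x :: y :: l) (by grind) (by grind) (by grind)
        (hasTopExt_walkNonfaces _ (by grind))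
    rw [show 2 * (a :: b :: c :: x :: y :: l).length / 3 =
      2 * (x :: y :: l).length / 3 + 2 by grind] at htop ⊢
    have := htop.nontrivial
    exact isSimpleModule_ext_of_sup_span (colon_sqfreeMonomial hlink)
      (sup_span_sqfreeMonomial hdel) (hlink_top.hasProjectiveDimensionLE_of_le
        (e := 2 * (x :: y :: l).length / 3 + 1) (by grind))

end Paths

section Cycles

variable {K σ : Type*} [Field K] {a b y z : σ} {p q : List σ}

theorem walkNonfaces_cycle_inf_Ici :
    walkNonfaces (b :: (q ++ [z, a, b])) ⊓ UpperSet.Ici {a} =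
      walkNonfaces (b :: (q ++ [z])) ⊓ UpperSet.Ici {a} := by
  simpa using walkNonfaces_append_cons_inf_Ici (l₁ := b :: (q ++ [z])) (v := a) (l₂ := [b])

theorem link_walkNonfaces_cycle [DecidableEq σ] (h : (a :: b :: (q ++ [z])).Nodup) :
    link (walkNonfaces (b :: (q ++ [z, a, b]))) {a} =
      walkNonfaces q ⊓ UpperSet.Ici {z} ⊓ UpperSet.Ici {b} := by
  have hlink := link_walkNonfaces_append (v := a) (l₁ := b :: q) (x := z) (y := b) (l₂ := [])
    (by grind) (by grind)
  rw [inf_right_comm, ← walkNonfaces_cons_inf_Ici, inf_right_comm]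
  simpa using hlink

theorem hasTopExt_cycle_link (h : (a :: b :: (q ++ [z])).Nodup) :
    HasTopExt (stanleyReisner K (walkNonfaces q ⊓ UpperSet.Ici {z} ⊓ UpperSet.Ici {b}))
      (residueModule K σ) (2 * q.length / 3 + 2) :=
  (hasTopExt_walkNonfaces q (by grind)).walkNonfaces_inf_Ici_inf_Ici (by grind) (by grind)

theorem hasTopExt_cycle_deletion (h : (a :: b :: (q ++ [z])).Nodup) :
    HasTopExt (stanleyReisner K (walkNonfaces (b :: (q ++ [z])) ⊓ UpperSet.Ici {a}))
      (residueModule K σ) (2 * (q.length + 2) / 3 + 1) := by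
  classical
  rw [List.nodup_cons] at h
  simpa using (hasTopExt_walkNonfaces _ h.2).inf_Ici (link_walkNonfaces_of_notMem h.1)
    (Finset.singleton_nonempty a)

theorem hasTopExt_cycle_of_length_mod_three_ne_one (h : (a :: b :: (q ++ [z])).Nodup)
    (hq : q.length % 3 ≠ 1) :
    HasTopExt (stanleyReisner K (walkNonfaces (b :: (q ++ [z, a, b]))))
      (residueModule K σ) (2 * q.length / 3 + 2) := by
  classical
  exact (hasTopExt_cycle_link h).of_colon (colon_sqfreeMonomial (link_walkNonfaces_cycle h))
    (sup_span_sqfreeMonomial walkNonfaces_cycle_inf_Ici)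
    ((hasTopExt_cycle_deletion h).hasProjectiveDimensionLE_of_le (by omega))

theorem precomp_cycle_link_eq_zero (h : (a :: b :: (y :: p ++ [z])).Nodup)
    (hp : p.length % 3 = 0)
    (hle : squarefreeIdeal K (walkNonfaces (b :: (y :: p ++ [z]))) ≤
      squarefreeIdeal K (walkNonfaces (y :: p) ⊓ UpperSet.Ici {z} ⊓ UpperSet.Ici {b}))
    (x : Abelian.Ext
      (stanleyReisner K (walkNonfaces (y :: p) ⊓ UpperSet.Ici {z} ⊓ UpperSet.Ici {b}))
      (residueModule K σ) (2 * p.length / 3 + 2)) :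
    (mk₀ (ModuleCat.ofHom (Submodule.factor hle))).comp x (zero_add _) = 0 := by
  classical
  have hlink : link (walkNonfaces (b :: y :: p) ⊓ UpperSet.Ici {z}) {b} =
      walkNonfaces p ⊓ UpperSet.Ici {y} ⊓ UpperSet.Ici {z} := by
    rw [link_inf, link_walkNonfaces_cons_cons (by grind), link_Ici_of_disjoint (by simp; grind)]
  have hdel : walkNonfaces (b :: y :: p) ⊓ UpperSet.Ici {z} ⊓ UpperSet.Ici {b} =
      walkNonfaces (y :: p) ⊓ UpperSet.Ici {z} ⊓ UpperSet.Ici {b} := by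
    rw [inf_right_comm, walkNonfaces_cons_inf_Ici, inf_right_comm]
  have hconcat := walkNonfaces_concat_inf_Ici (l := b :: y :: p) (v := z)
  have hlink_top := ((hasTopExt_walkNonfaces (K := K) p (by grind)).walkNonfaces_inf_Ici_inf_Ici
    (a := y) (b := z) (by grind) (by grind))
  have hcycle_link := hasTopExt_cycle_link (K := K) h
  have hpath := hasTopExt_walkNonfaces (K := K) (b :: y :: p) (by grind)
  have hpath_simple :=
    isSimpleModule_ext_walkNonfaces (K := K) (b :: y :: p) (by grind) (by grind)
  rw [show 2 * (b :: y :: p).length / 3 = 2 * p.length / 3 + 1 by grind] at hpath hpath_simple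
  have := isSimpleModule_ext_inf_Ici
    (link_walkNonfaces_of_notMem (v := z) (by grind)) (Finset.singleton_nonempty z) hpath
  have := hlink_top.nontrivial
  refine precomp_factor_trans_eq_zero
    (squarefreeIdeal_antitone (hconcat.ge.trans inf_le_left))
    (squarefreeIdeal_antitone (hdel.ge.trans inf_le_left)) ?_
  exact precomp_factor_eq_zero _ (colon_sqfreeMonomial hlink) (sup_span_sqfreeMonomial hdel)
    (hcycle_link.hasProjectiveDimensionLE_of_le (e := 2 * p.length / 3 + 2) (by grind)) x

theorem hasTopExt_cycle_of_length_mod_three_eq_one (h : (a :: b :: (y :: p ++ [z])).Nodup)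
    (hp : p.length % 3 = 0) :
    HasTopExt (stanleyReisner K (walkNonfaces (b :: (y :: p ++ [z, a, b]))))
      (residueModule K σ) (2 * p.length / 3 + 3) := by
  classical
  have ha : a ∉ b :: (y :: p ++ [z]) := (List.nodup_cons.1 h).1
  have hlink : link (walkNonfaces (b :: (y :: p ++ [z, a, b]))) {a} =
      walkNonfaces (y :: p) ⊓ UpperSet.Ici {z} ⊓ UpperSet.Ici {b} := link_walkNonfaces_cycle h
  have hlink_top := hasTopExt_cycle_link (K := K) h
  have hdel_top := hasTopExt_cycle_deletion (K := K) h
  have hlen : 2 * ((y :: p).length + 2) / 3 + 1 = 2 * p.length / 3 + 3 := by grind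
  rw [hlen] at hdel_top
  have hcycle_le_path : walkNonfaces (b :: (y :: p ++ [z, a, b])) ≤
      walkNonfaces (b :: (y :: p ++ [z])) := by
    simpa using walkNonfaces_append_le (l₁ := b :: (y :: p ++ [z])) (l₂ := [a, b])
  have hlink_le_path := hlink.ge.trans (link_le.trans hcycle_le_path)
  constructor
  · exact hasProjectiveDimensionLE_of_colon (colon_sqfreeMonomial hlink)
      (sup_span_sqfreeMonomial walkNonfaces_cycle_inf_Ici)
      (hlink_top.hasProjectiveDimensionLE_of_le (by grind)) hdel_top.hasProjectiveDimensionLE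
  · have := hdel_top.nontrivial
    exact nontrivial_ext_of_precomp_factor_eq_zero
      (squarefreeIdeal_antitone hcycle_le_path) (squarefreeIdeal_antitone hlink_le_path)
      (colon_sqfreeMonomial (link_walkNonfaces_of_notMem ha)) (sup_span_sqfreeMonomial rfl)
      (colon_sqfreeMonomial hlink) (sup_span_sqfreeMonomial walkNonfaces_cycle_inf_Ici)
      (precomp_cycle_link_eq_zero h hp _)

theorem hasTopExt_cycle (h : (a :: b :: (q ++ [z])).Nodup) :
    HasTopExt (stanleyReisner K (walkNonfaces (b :: (q ++ [z, a, b]))))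
      (residueModule K σ) ((2 * q.length + 7) / 3) := by
  rcases eq_or_ne (q.length % 3) 1 with hq | hq
  · obtain ⟨y, p, rfl⟩ := List.exists_cons_of_length_pos (l := q) (by omega)
    convert hasTopExt_cycle_of_length_mod_three_eq_one h (by grind) using 1
    grind
  · convert hasTopExt_cycle_of_length_mod_three_ne_one h hq using 1
    omega

end Cycles

section ZModCycle

variable (K : Type) [Field K]

theorem walkNonfaces_map_range_zmod (n : ℕ) [NeZero n] :
    walkNonfaces ((List.range (n + 1)).map (Nat.cast : ℕ → ZMod n)) =
      ⨅ i : ZMod n, UpperSet.Ici {i, i + 1} := by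
  ext F
  simp only [SetLike.mem_coe, mem_walkNonfaces, List.isChain_map, List.isChain_range_succ,
    UpperSet.mem_iInf_iff, UpperSet.mem_Ici_iff, Finset.insert_subset_iff,
    Finset.singleton_subset_iff, not_forall, not_not, Nat.succ_eq_add_one, Nat.cast_add_one]
  constructor
  · rintro ⟨m, -, hm⟩
    exact ⟨m, hm⟩
  · rintro ⟨i, hi⟩
    exact ⟨i.val, i.val_lt, by rwa [ZMod.natCast_zmod_val]⟩

theorem cycleIdeal_eq_squarefreeIdeal (n : ℕ) [Fact (1 < n)] :
    cycleIdeal K n = squarefreeIdeal K (⨅ i : ZMod n, UpperSet.Ici {i, i + 1}) := by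
  have hne (i : ZMod n) : i ≠ i + 1 := by simp
  simp only [cycleIdeal, squarefreeIdeal_iInf, squarefreeIdeal_Ici, sqfreeMonomial_pair (hne _),
    Ideal.span_range_eq_iSup]

theorem nodup_map_range_zmod (n : ℕ) : ((List.range n).map (Nat.cast : ℕ → ZMod n)).Nodup :=
  List.nodup_range.map_on fun i hi j hj h ↦ by
    rw [← ZMod.val_cast_of_lt (List.mem_range.1 hi), h, ZMod.val_cast_of_lt (List.mem_range.1 hj)]

theorem map_range_add_three {α : Type*} (f : ℕ → α) (m : ℕ) :
    (List.range (m + 3)).map f =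
      f 0 :: ((List.range' 1 m).map f ++ [f (m + 1)]) ++ [f (m + 2)] := by
  rw [List.range_succ, List.range_succ, List.range_eq_range', List.range'_succ]
  simp

theorem hasTopExt_cycleIdeal (m : ℕ) :
    HasTopExt (ModuleCat.of _ (MvPolynomial (ZMod (m + 3)) K ⧸ cycleIdeal K (m + 3)))
      (residueModule K (ZMod (m + 3))) ((2 * m + 7) / 3) := by
  have : Fact (1 < m + 3) := ⟨by omega⟩
  have hnodup := nodup_map_range_zmod (m + 3)
  have hlast : ((m + 3 : ℕ) : ZMod (m + 3)) = (0 : ℕ) := by simp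
  rw [map_range_add_three, List.nodup_append_comm] at hnodup
  rw [cycleIdeal_eq_squarefreeIdeal, ← walkNonfaces_map_range_zmod, List.range_succ,
    List.map_append, List.map_singleton, hlast, map_range_add_three, List.append_assoc,
    List.cons_append, List.append_assoc]
  have htop := hasTopExt_cycle (K := K) hnodup
  rw [List.length_map, List.length_range'] at htop
  exact htop

end ZModCycle

end EdgeIdeal

open EdgeIdeal in
/-- The projective dimension of `R/I(Cₙ)` (`n ≥ 3`) is `2n/3`, `(2n+1)/3`, `(2n-1)/3`
according to `n ≡ 0, 1, 2 (mod 3)`; in particular it does not depend on the field `K`. -/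
theorem cycle_projective_dimension (K : Type) [Field K] (n : ℕ) (hn : 3 ≤ n) :
    projDim (MvPolynomial (ZMod n) K) (MvPolynomial (ZMod n) K ⧸ cycleIdeal K n) =
      ((if n % 3 = 0 then 2 * n / 3
        else if n % 3 = 1 then (2 * n + 1) / 3
        else (2 * n - 1) / 3 : ℕ) : ℕ∞) := by
  obtain ⟨m, rfl⟩ := Nat.exists_eq_add_of_le' hn
  rw [(hasTopExt_cycleIdeal K m).projDim_eq]
  congr 1
  split_ifs <;> omega
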